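/- There exist a constant C > 0 and b₀ such that for all integers b ≥ b₀ and all points o ∈ ℝ₊² with D_δ(o) ⊆ ℝ₊², the expected value of τ_b satisfies |E(τ_b) − b^{1/3}·λ̂(o)²/(4·(log b)⁶)| ≤ C·b^{1/3}/(log b)^{10}. -/

import Mathlib

/-!
A given sector `Q_i` or `R_i` has area `δ² θ_b / 2` and lies in `D̂₁(o)`, so a uniform point hits it
with probability `p = λ̂ δ² / (2L)`. Opposite sectors are disjoint, and choosing which of the `b`
points is the one in `Q_i` and which is the one in `R_i` gives the exact value
`E(τ_b) = L · b (b - 1) · p² (1 - 2p)^(b - 2)`. With `x = b^(1/3) (log b)²`, so that `L = ⌊x⌋`, this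
is the claimed main term times `(1 - 1/b) · (x / L) · (1 - 2p)^(b - 2)`. Each of these three factors
is `1 + O((log b)⁻⁴)` as soon as `(log b)² ≤ b^(1/3)`, uniformly in `o` because `D̂₁(o)` contains a
disk of fixed radius and hence `λ̂` is bounded.
-/

open MeasureTheory Real Set
open scoped ENNReal

noncomputable section

/-- The Euclidean plane ℝ². -/
abbrev Plane := EuclideanSpace ℝ (Fin 2)

/-- The point in the plane with Cartesian coordinates `(x, y)`. -/
def pt (x y : ℝ) : Plane := (WithLp.equiv 2 (Fin 2 → ℝ)).symm ![x, y]

/-- `D p r` is the closed disk of radius `r` centered at `p`. -/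
def D (p : Plane) (r : ℝ) : Set Plane := Metric.closedBall p r

/-- `X o q u` is the area of `D₁(o) \ (D₁(q) ∪ D₁(u))` (Lebesgue measure). -/
def X (o q u : Plane) : ℝ := (volume (D o 1 \ (D q 1 ∪ D u 1))).toReal

/-- `L = ⌊b^(1/3) (log b)²⌋`. -/
def L (b : ℝ) : ℕ := ⌊b ^ (1/3 : ℝ) * (Real.log b) ^ 2⌋₊

/-- `δ = 1/(b^(1/3) log b)`. -/
def δ (b : ℝ) : ℝ := 1 / (b ^ (1/3 : ℝ) * Real.log b)

/-- `θb = π / L`. -/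
def θb (b : ℝ) : ℝ := Real.pi / L b

/-- The point with polar coordinates `(r, θ)` relative to `o`. -/
def polarPt (o : Plane) (r θ : ℝ) : Plane := o + r • pt (Real.cos θ) (Real.sin θ)

/-- The sector `Q_i` of the disk `D_δ(o)`: points with polar coordinates `(r, θ)` relative
to `o` satisfying `0 < r ≤ δ` and `(i - 1/2)θ_b ≤ θ ≤ (i + 1/2)θ_b`. -/
def Qsector (o : Plane) (b : ℝ) (i : ℕ) : Set Plane :=
  {p | ∃ r θ : ℝ, 0 < r ∧ r ≤ δ b ∧
    ((i : ℝ) - 1/2) * θb b ≤ θ ∧ θ ≤ ((i : ℝ) + 1/2) * θb b ∧ p = polarPt o r θ}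

/-- The sector `R_i`, the reflection of `Q_i` through `o`: points with polar coordinates
`(r, θ)` relative to `o` satisfying `0 < r ≤ δ` and `(i - 1/2)θ_b ≤ θ - π ≤ (i + 1/2)θ_b`. -/
def Rsector (o : Plane) (b : ℝ) (i : ℕ) : Set Plane :=
  {p | ∃ r θ : ℝ, 0 < r ∧ r ≤ δ b ∧
    ((i : ℝ) - 1/2) * θb b ≤ θ - Real.pi ∧ θ - Real.pi ≤ ((i : ℝ) + 1/2) * θb b ∧
    p = polarPt o r θ}

/-- The extreme point `q̃_i`, with polar coordinates `(δ, (i - 1/2)θ_b)` relative to `o`. -/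
def qtil (o : Plane) (b : ℝ) (i : ℕ) : Plane := polarPt o (δ b) (((i : ℝ) - 1/2) * θb b)

/-- The extreme point `ũ_i`, with polar coordinates `(δ, (i + 1/2)θ_b + π)` relative to `o`. -/
def util (o : Plane) (b : ℝ) (i : ℕ) : Plane :=
  polarPt o (δ b) (((i : ℝ) + 1/2) * θb b + Real.pi)

/-- The closed positive quadrant `ℝ₊²`. -/
def quad : Set Plane := {p | 0 ≤ p 0 ∧ 0 ≤ p 1}

/-- The truncated unit disk `D̂₁(o) = D₁(o) ∩ ℝ₊²`. -/
def Dhat (o : Plane) : Set Plane := D o 1 ∩ quad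

/-- `λ̂(o) = π / |D̂₁(o)|`. -/
def lamHat (o : Plane) : ℝ := Real.pi / (volume (Dhat o)).toReal

/-- The uniform probability measure on a set `S` (normalized restricted Lebesgue measure). -/
def unif (S : Set Plane) : Measure Plane := (volume S)⁻¹ • volume.restrict S

/-- The joint law of `b` points chosen independently and uniformly at random from `D̂₁(o)`. -/
def ptsMeasure (o : Plane) (b : ℕ) : Measure (Fin b → Plane) :=
  Measure.pi fun _ => unif (Dhat o)

/-- The number of the points `ω 0, …, ω (b-1)` that lie in the set `S`. -/
def countIn {b : ℕ} (S : Set Plane) (ω : Fin b → Plane) : ℕ :=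
  Set.ncard {j : Fin b | ω j ∈ S}

open scoped Classical in
/-- `τ_b = Σ_{i=0}^{L-1} 1[N(Q_i) = 1 ∧ N(R_i) = 1]`. -/
def tau (o : Plane) (b : ℕ) (ω : Fin b → Plane) : ℕ :=
  ∑ i ∈ Finset.range (L b),
    if countIn (Qsector o b i) ω = 1 ∧ countIn (Rsector o b i) ω = 1 then 1 else 0

section PolarRegions

lemma polarCoord_symm_mem_setOf_norm_arg_iff {s t : Set ℝ} {p : ℝ × ℝ}
    (hp : p ∈ polarCoord.target) :
    Complex.polarCoord.symm p ∈ {z : ℂ | ‖z‖ ∈ s ∧ z.arg ∈ t} ↔ p ∈ s ×ˢ t := by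
  have hnorm : ‖Complex.polarCoord.symm p‖ = p.1 := by
    rw [Complex.norm_polarCoord_symm, abs_of_pos hp.1]
  have harg : (Complex.polarCoord.symm p).arg = p.2 := by
    rw [Complex.polarCoord_symm_apply]
    simpa using Complex.arg_mul_cos_add_sin_mul_I hp.1 ⟨hp.2.1, hp.2.2.le⟩
  rw [mem_ofPred_eq, hnorm, harg, mem_prod]

lemma measurableSet_setOf_norm_arg {s t : Set ℝ} (hs : MeasurableSet s) (ht : MeasurableSet t) :
    MeasurableSet {z : ℂ | ‖z‖ ∈ s ∧ z.arg ∈ t} :=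
  (measurable_norm hs).inter (Complex.measurable_arg ht)

lemma volume_setOf_norm_arg {s t : Set ℝ} (hs : MeasurableSet s) (ht : MeasurableSet t) :
    volume {z : ℂ | ‖z‖ ∈ s ∧ z.arg ∈ t} =
      (∫⁻ r in s ∩ Ioi 0, ENNReal.ofReal r) * volume (t ∩ Ioo (-π) π) := by
  classical
  calc volume {z : ℂ | ‖z‖ ∈ s ∧ z.arg ∈ t}
      = ∫⁻ z, {z : ℂ | ‖z‖ ∈ s ∧ z.arg ∈ t}.indicator 1 z :=
        (lintegral_indicator_one (measurableSet_setOf_norm_arg hs ht)).symm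
    _ = ∫⁻ p in polarCoord.target, ENNReal.ofReal p.1 •
          {z : ℂ | ‖z‖ ∈ s ∧ z.arg ∈ t}.indicator 1 (Complex.polarCoord.symm p) :=
        (Complex.lintegral_comp_polarCoord_symm _).symm
    _ = ∫⁻ p in polarCoord.target, (s ×ˢ t).indicator (fun p => ENNReal.ofReal p.1) p := by
        refine setLIntegral_congr_fun polarCoord.open_target.measurableSet fun p hp => ?_
        simp only [indicator_apply, polarCoord_symm_mem_setOf_norm_arg_iff hp, Pi.one_apply,
          smul_eq_mul, mul_ite, mul_one, mul_zero]
    _ = ∫⁻ p in (s ∩ Ioi 0) ×ˢ (t ∩ Ioo (-π) π), ENNReal.ofReal p.1 := by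
        rw [lintegral_indicator (hs.prod ht), Measure.restrict_restrict (hs.prod ht),
          polarCoord_target, prod_inter_prod]
    _ = (∫⁻ r in s ∩ Ioi 0, ENNReal.ofReal r) * ∫⁻ _ in t ∩ Ioo (-π) π, 1 := by
        rw [Measure.volume_eq_prod, ← Measure.prod_restrict,
          ← lintegral_prod_mul (by fun_prop) (by fun_prop)]
        simp only [mul_one]
    _ = (∫⁻ r in s ∩ Ioi 0, ENNReal.ofReal r) * volume (t ∩ Ioo (-π) π) := by
        rw [setLIntegral_one]

lemma lintegral_Ioc_ofReal {ρ : ℝ} (hρ : 0 ≤ ρ) :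
    ∫⁻ r in Ioc 0 ρ, ENNReal.ofReal r = ENNReal.ofReal (ρ ^ 2 / 2) := by
  have hint : IntegrableOn (fun r : ℝ => r) (Ioc 0 ρ) := continuous_id.integrableOn_Ioc
  rw [← ofReal_integral_eq_lintegral_ofReal hint
      ((ae_restrict_mem measurableSet_Ioc).mono fun r hr => hr.1.le),
    ← intervalIntegral.integral_of_le hρ]
  simp

lemma volume_setOf_norm_mem_Ioc_arg_mem_Icc {ρ η : ℝ} (hρ : 0 ≤ ρ) (hη : η < π) :
    volume {z : ℂ | ‖z‖ ∈ Ioc 0 ρ ∧ z.arg ∈ Icc (-η) η} = ENNReal.ofReal (ρ ^ 2 * η) := by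
  have hradii : Ioc 0 ρ ∩ Ioi 0 = Ioc 0 ρ := inter_eq_left.2 fun r hr => hr.1
  have hangles : Icc (-η) η ∩ Ioo (-π) π = Icc (-η) η :=
    inter_eq_left.2 (Icc_subset_Ioo (neg_lt_neg hη) hη)
  rw [volume_setOf_norm_arg measurableSet_Ioc measurableSet_Icc, hradii, hangles,
    lintegral_Ioc_ofReal hρ, Real.volume_Icc, ← ENNReal.ofReal_mul (by positivity)]
  ring_nf

end PolarRegions

section Sectors

/-- The circular sector with apex `o`, radius `ρ`, central direction `φ` and half-angle `η`; like
`Qsector` and `Rsector` it omits its apex. -/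
def sector (o : Plane) (ρ φ η : ℝ) : Set Plane :=
  {p | ∃ r θ : ℝ, 0 < r ∧ r ≤ ρ ∧ φ - η ≤ θ ∧ θ ≤ φ + η ∧ p = polarPt o r θ}

lemma Qsector_eq_sector (o : Plane) (b : ℝ) (i : ℕ) :
    Qsector o b i = sector o (δ b) (i * θb b) (θb b / 2) := by
  have hlower : ((i : ℝ) - 1/2) * θb b = i * θb b - θb b / 2 := by ring
  have hupper : ((i : ℝ) + 1/2) * θb b = i * θb b + θb b / 2 := by ring
  simp only [Qsector, sector, hlower, hupper]

lemma Rsector_eq_sector (o : Plane) (b : ℝ) (i : ℕ) :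
    Rsector o b i = sector o (δ b) (i * θb b + π) (θb b / 2) := by
  have hlower (θ : ℝ) : ((i : ℝ) - 1/2) * θb b ≤ θ - π ↔ i * θb b + π - θb b / 2 ≤ θ := by
    rw [le_sub_iff_add_le]
    ring_nf
  have hupper (θ : ℝ) : θ - π ≤ ((i : ℝ) + 1/2) * θb b ↔ θ ≤ i * θb b + π + θb b / 2 := by
    rw [sub_le_iff_le_add]
    ring_nf
  simp only [Rsector, sector, hlower, hupper]

/-- The complex coordinate on the plane with origin `o` whose positive real axis points in the
direction `φ`. -/
def complexCoord (o : Plane) (φ : ℝ) (p : Plane) : ℂ :=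
  rotation (Circle.exp (-φ)) (Complex.orthonormalBasisOneI.repr.symm (p - o))

lemma complexCoord_injective (o : Plane) (φ : ℝ) : Function.Injective (complexCoord o φ) :=
  (rotation (Circle.exp (-φ))).injective.comp <|
    Complex.orthonormalBasisOneI.repr.symm.injective.comp sub_left_injective

lemma measurePreserving_complexCoord (o : Plane) (φ : ℝ) :
    MeasurePreserving (complexCoord o φ) :=
  (rotation (Circle.exp (-φ))).measurePreserving.comp <|
    Complex.orthonormalBasisOneI.repr.symm.measurePreserving.comp <|
      measurePreserving_sub_right volume o

lemma complexCoord_polarPt (o : Plane) (φ r θ : ℝ) :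
    complexCoord o φ (polarPt o r θ) = r * Complex.exp ((θ - φ : ℝ) * Complex.I) := by
  have hdir : Complex.orthonormalBasisOneI.repr.symm (pt (cos θ) (sin θ)) =
      Complex.exp (θ * Complex.I) := by
    rw [Complex.orthonormalBasisOneI_repr_symm_apply, Complex.exp_mul_I]
    simp [pt]
  rw [complexCoord, polarPt, add_sub_cancel_left, map_smul, map_smul, hdir, rotation_apply,
    Circle.coe_exp, ← Complex.exp_add, Complex.real_smul]
  push_cast
  ring_nf

lemma re_complexCoord_polarPt (o : Plane) (φ r θ : ℝ) :
    (complexCoord o φ (polarPt o r θ)).re = r * cos (θ - φ) := by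
  rw [complexCoord_polarPt, Complex.re_ofReal_mul, Complex.exp_ofReal_mul_I_re]

lemma norm_complexCoord_polarPt (o : Plane) (φ : ℝ) {r : ℝ} (hr : 0 ≤ r) (θ : ℝ) :
    ‖complexCoord o φ (polarPt o r θ)‖ = r := by
  rw [complexCoord_polarPt, norm_mul, Complex.norm_exp_ofReal_mul_I, mul_one,
    Complex.norm_of_nonneg hr]

lemma arg_complexCoord_polarPt (o : Plane) {φ r θ : ℝ} (hr : 0 < r)
    (hθ : θ - φ ∈ Ioc (-π) π) : (complexCoord o φ (polarPt o r θ)).arg = θ - φ := by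
  rw [complexCoord_polarPt, Complex.exp_mul_I, Complex.arg_mul_cos_add_sin_mul_I hr hθ]

lemma polarPt_norm_arg_complexCoord (o : Plane) (φ : ℝ) (p : Plane) :
    polarPt o ‖complexCoord o φ p‖ (φ + (complexCoord o φ p).arg) = p := by
  apply complexCoord_injective o φ
  rw [complexCoord_polarPt, add_sub_cancel_left, Complex.norm_mul_exp_arg_mul_I]

lemma sector_eq_preimage_complexCoord (o : Plane) (ρ φ : ℝ) {η : ℝ} (hη : η < π) :
    sector o ρ φ η = complexCoord o φ ⁻¹' {z | ‖z‖ ∈ Ioc 0 ρ ∧ z.arg ∈ Icc (-η) η} := by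
  ext p
  constructor
  · rintro ⟨r, θ, hr, hrρ, hlower, hupper, rfl⟩
    have hθ : θ - φ ∈ Ioc (-π) π := ⟨by linarith, by linarith⟩
    rw [mem_preimage, mem_ofPred_eq, norm_complexCoord_polarPt o φ hr.le,
      arg_complexCoord_polarPt o hr hθ]
    exact ⟨⟨hr, hrρ⟩, by linarith, by linarith⟩
  · rintro ⟨⟨hpos, hρ⟩, hlower, hupper⟩
    exact ⟨_, _, hpos, hρ, by linarith, by linarith, (polarPt_norm_arg_complexCoord o φ p).symm⟩

lemma measurableSet_sector (o : Plane) (ρ φ : ℝ) {η : ℝ} (hη : η < π) :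
    MeasurableSet (sector o ρ φ η) := by
  rw [sector_eq_preimage_complexCoord o ρ φ hη]
  exact (measurePreserving_complexCoord o φ).measurable
    (measurableSet_setOf_norm_arg measurableSet_Ioc measurableSet_Icc)

lemma volume_sector (o : Plane) (φ : ℝ) {ρ η : ℝ} (hρ : 0 ≤ ρ) (hη : η < π) :
    volume (sector o ρ φ η) = ENNReal.ofReal (ρ ^ 2 * η) := by
  rw [sector_eq_preimage_complexCoord o ρ φ hη,
    (measurePreserving_complexCoord o φ).measure_preimage
      (measurableSet_setOf_norm_arg measurableSet_Ioc measurableSet_Icc).nullMeasurableSet,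
    volume_setOf_norm_mem_Ioc_arg_mem_Icc hρ hη]

-- The coordinate along the direction `φ` is positive on one sector and negative on the other.
lemma disjoint_sector_add_pi (o : Plane) (ρ φ : ℝ) {η : ℝ} (hη : η < π / 2) :
    Disjoint (sector o ρ φ η) (sector o ρ (φ + π) η) := by
  rw [Set.disjoint_left]
  rintro p ⟨r, θ, hr, -, hθ₁, hθ₂, rfl⟩ ⟨s, ψ, hs, -, hψ₁, hψ₂, heq⟩
  have hpos : 0 < r * cos (θ - φ) :=
    mul_pos hr (cos_pos_of_mem_Ioo ⟨by linarith, by linarith⟩)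
  have hneg : s * cos (ψ - φ) < 0 :=
    mul_neg_of_pos_of_neg hs (cos_neg_of_pi_div_two_lt_of_lt (by linarith) (by linarith))
  rw [← re_complexCoord_polarPt o, heq, re_complexCoord_polarPt] at hpos
  exact hpos.not_gt hneg

lemma norm_pt (x y : ℝ) : ‖pt x y‖ = √(x ^ 2 + y ^ 2) := by
  simp [EuclideanSpace.norm_eq, pt]

lemma sector_subset_D (o : Plane) (ρ φ η : ℝ) : sector o ρ φ η ⊆ D o ρ := by
  rintro p ⟨r, θ, hr, hrρ, -, -, rfl⟩
  rwa [D, mem_closedBall_iff_norm, polarPt, add_sub_cancel_left, norm_smul, norm_pt,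
    cos_sq_add_sin_sq, sqrt_one, mul_one, norm_of_nonneg hr.le]

end Sectors

section OnePointEach

variable {ι α : Type*}

/-- The configurations `ω` whose `j`-th point is the only one in `A` and whose `k`-th point is the
only one in `B`. -/
def onlyPointsIn (A B : Set α) (j k : ι) : Set (ι → α) :=
  {ω | {i | ω i ∈ A} = {j} ∧ {i | ω i ∈ B} = {k}}

lemma onlyPointsIn_eq_pi [DecidableEq ι] {A B : Set α} (hAB : Disjoint A B) {j k : ι}
    (hjk : j ≠ k) :
    onlyPointsIn A B j k =
      univ.pi (Function.update (Function.update (fun _ => (A ∪ B)ᶜ) k B) j A) := by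
  ext ω
  simp only [onlyPointsIn, Set.ext_iff, mem_ofPred_eq, mem_singleton_iff, mem_univ_pi,
    Function.update_apply, ← forall_and]
  refine forall_congr' fun i => ?_
  have hA_notB : ω i ∈ A → ω i ∉ B := fun h => Set.disjoint_left.1 hAB h
  have hne : i = j → i ≠ k := fun h => h ▸ hjk
  simp only [apply_ite (ω i ∈ ·), mem_compl_iff, mem_union]
  split_ifs <;> tauto

lemma setOf_ncard_eq_one_and_ncard_eq_one_eq_biUnion [Fintype ι] {A B : Set α}
    (hAB : Disjoint A B) :
    {ω : ι → α | {i | ω i ∈ A}.ncard = 1 ∧ {i | ω i ∈ B}.ncard = 1} =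
      ⋃ x ∈ (Finset.univ : Finset ι).offDiag, onlyPointsIn A B x.1 x.2 := by
  ext ω
  simp only [ncard_eq_one, onlyPointsIn, mem_iUnion, Finset.mem_offDiag, Finset.mem_univ, true_and,
    exists_prop, Prod.exists, mem_ofPred_eq]
  constructor
  · rintro ⟨⟨j, hj⟩, k, hk⟩
    refine ⟨j, k, ?_, hj, hk⟩
    rintro rfl
    exact Set.disjoint_left.1 hAB (hj.ge (mem_singleton j)) (hk.ge (mem_singleton j))
  · rintro ⟨j, k, -, hj, hk⟩
    exact ⟨⟨j, hj⟩, k, hk⟩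

lemma pairwise_disjoint_onlyPointsIn (A B : Set α) :
    Pairwise fun x y : ι × ι => Disjoint (onlyPointsIn A B x.1 x.2) (onlyPointsIn A B y.1 y.2) :=
  fun _ _ hxy => Set.disjoint_left.2 fun _ hx hy => hxy <|
    Prod.ext (singleton_injective (hx.1.symm.trans hy.1))
      (singleton_injective (hx.2.symm.trans hy.2))

variable [MeasurableSpace α]

lemma measurableSet_setOf_indices_eq [Countable ι] {S : Set α} (hS : MeasurableSet S)
    (J : Set ι) : MeasurableSet {ω : ι → α | {i | ω i ∈ S} = J} := by
  have hinter : {ω : ι → α | {i | ω i ∈ S} = J} = ⋂ i, {ω | ω i ∈ S ↔ i ∈ J} := by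
    ext ω
    simp only [Set.ext_iff, mem_ofPred_eq, mem_iInter]
  rw [hinter]
  exact MeasurableSet.iInter fun i =>
    ((measurable_pi_apply i hS).mem.iff measurable_const).setOf

lemma measurableSet_setOf_ncard_eq_one [Countable ι] {S : Set α} (hS : MeasurableSet S) :
    MeasurableSet {ω : ι → α | {i | ω i ∈ S}.ncard = 1} := by
  have hunion : {ω : ι → α | {i | ω i ∈ S}.ncard = 1} = ⋃ j, {ω | {i | ω i ∈ S} = {j}} := by
    ext ω
    simp only [ncard_eq_one, mem_ofPred_eq, mem_iUnion]
  rw [hunion]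
  exact MeasurableSet.iUnion fun j => measurableSet_setOf_indices_eq hS {j}

variable [Fintype ι] {A B : Set α}

variable (μ : Measure α) [IsProbabilityMeasure μ]

lemma measureReal_onlyPointsIn (hA : MeasurableSet A) (hB : MeasurableSet B)
    (hAB : Disjoint A B) {j k : ι} (hjk : j ≠ k) :
    (Measure.pi fun _ : ι => μ).real (onlyPointsIn A B j k) =
      μ.real A * (μ.real B * (1 - (μ.real A + μ.real B)) ^ (Fintype.card ι - 2)) := by
  classical
  have hcompl : μ.real (A ∪ B)ᶜ = 1 - (μ.real A + μ.real B) := by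
    rw [probReal_compl_eq_one_sub (hA.union hB), measureReal_union hAB hB]
  have hk : k ∈ (Finset.univ \ {j} : Finset ι) := by simpa using hjk.symm
  have hcard : ((Finset.univ \ {j}) \ {k} : Finset ι).card = Fintype.card ι - 2 := by
    rw [Finset.card_sdiff_of_subset (Finset.singleton_subset_iff.2 hk),
      Finset.card_sdiff_of_subset (Finset.subset_univ _), Finset.card_singleton,
      Finset.card_singleton, Finset.card_univ, Nat.sub_sub]
  simp only [onlyPointsIn_eq_pi hAB hjk, measureReal_def, Measure.pi_pi, ENNReal.toReal_prod,
    Function.apply_update (fun _ S => (μ S).toReal)] at hcompl ⊢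
  rw [Finset.prod_update_of_mem (Finset.mem_univ j), Finset.prod_update_of_mem hk,
    Finset.prod_const, hcard, hcompl]

lemma measureReal_setOf_ncard_eq_one_and_ncard_eq_one (hA : MeasurableSet A) (hB : MeasurableSet B)
    (hAB : Disjoint A B) :
    (Measure.pi fun _ : ι => μ).real
        {ω | {i | ω i ∈ A}.ncard = 1 ∧ {i | ω i ∈ B}.ncard = 1} =
      Fintype.card ι * (Fintype.card ι - 1) *
        (μ.real A * (μ.real B * (1 - (μ.real A + μ.real B)) ^ (Fintype.card ι - 2))) := by
  classical
  rw [setOf_ncard_eq_one_and_ncard_eq_one_eq_biUnion hAB,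
    measureReal_biUnion_finset ((pairwise_disjoint_onlyPointsIn A B).set_pairwise _)
      fun x _ => (measurableSet_setOf_indices_eq hA {x.1}).inter
        (measurableSet_setOf_indices_eq hB {x.2}),
    Finset.sum_congr rfl fun x hx =>
      measureReal_onlyPointsIn μ hA hB hAB (Finset.mem_offDiag.1 hx).2.2,
    Finset.sum_const, Finset.offDiag_card, nsmul_eq_mul, Finset.card_univ,
    Nat.cast_sub (Nat.le_mul_self _)]
  push_cast
  ring

end OnePointEach

section TruncatedDisk

lemma volume_Dhat_ne_top (o : Plane) : volume (Dhat o) ≠ ∞ :=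
  measure_ne_top_of_subset inter_subset_left measure_closedBall_lt_top.ne

lemma closedBall_subset_Dhat {o : Plane} (ho : o ∈ quad) :
    Metric.closedBall (o + pt (1/2) (1/2)) (1/4) ⊆ Dhat o := by
  have hdist : dist (o + pt (1/2) (1/2)) o ≤ 3/4 := by
    rw [dist_self_add_left, norm_pt, Real.sqrt_le_left (by norm_num)]
    norm_num
  refine subset_inter (Metric.closedBall_subset_closedBall' (by linarith)) fun p hp => ?_
  have hcoord (i : Fin 2) : |p i - (o i + 1/2)| ≤ 1/4 := by
    have := (PiLp.norm_apply_le (p - (o + pt (1/2) (1/2))) i).trans (mem_closedBall_iff_norm.1 hp)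
    fin_cases i <;> simpa [pt] using this
  constructor
  · linarith [ho.1, (abs_le.1 (hcoord 0)).1]
  · linarith [ho.2, (abs_le.1 (hcoord 1)).1]

lemma pi_div_le_volume_Dhat {o : Plane} (ho : o ∈ quad) : π / 16 ≤ (volume (Dhat o)).toReal := by
  calc π / 16 = (volume (Metric.closedBall (o + pt (1/2) (1/2)) (1/4))).toReal := by
        rw [EuclideanSpace.volume_closedBall_fin_two, ENNReal.toReal_mul, ENNReal.toReal_pow,
          ENNReal.toReal_ofReal (by norm_num), ENNReal.toReal_ofReal pi_pos.le]
        ring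
    _ ≤ (volume (Dhat o)).toReal :=
        ENNReal.toReal_mono (volume_Dhat_ne_top o) (measure_mono (closedBall_subset_Dhat ho))

lemma volume_Dhat_pos {o : Plane} (ho : o ∈ quad) : 0 < (volume (Dhat o)).toReal :=
  (by positivity : 0 < π / 16).trans_le (pi_div_le_volume_Dhat ho)

lemma lamHat_nonneg (o : Plane) : 0 ≤ lamHat o := by
  unfold lamHat
  positivity

lemma lamHat_le {o : Plane} (ho : o ∈ quad) : lamHat o ≤ 16 := by
  rw [lamHat, div_le_iff₀ (volume_Dhat_pos ho)]
  linarith [pi_div_le_volume_Dhat ho]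

lemma isProbabilityMeasure_unif {S : Set Plane} (h₀ : volume S ≠ 0) (h_top : volume S ≠ ∞) :
    IsProbabilityMeasure (unif S) :=
  ProbabilityTheory.cond_isProbabilityMeasure_of_finite h₀ h_top

lemma measureReal_unif_of_subset {S T : Set Plane} (hT : MeasurableSet T) (hTS : T ⊆ S) :
    (unif S).real T = volume.real T / volume.real S := by
  have hcond : unif S T = (volume S)⁻¹ * volume (S ∩ T) := ProbabilityTheory.cond_apply' hT volume
  rw [measureReal_def, hcond, inter_eq_right.2 hTS, ENNReal.toReal_mul, ENNReal.toReal_inv,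
    inv_mul_eq_div, measureReal_def, measureReal_def]

lemma measureReal_unif_sector {S : Set Plane} {o : Plane} {ρ η : ℝ} (φ : ℝ) (hρ : 0 ≤ ρ)
    (hη₀ : 0 ≤ η) (hη : η < π) (hS : D o ρ ⊆ S) :
    (unif S).real (sector o ρ φ η) = ρ ^ 2 * η / (volume S).toReal := by
  rw [measureReal_unif_of_subset (measurableSet_sector o ρ φ hη)
    ((sector_subset_D o ρ φ η).trans hS), measureReal_def, volume_sector o φ hρ hη,
    ENNReal.toReal_ofReal (by positivity), measureReal_def]

end TruncatedDisk

section Expectation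

/-- The probability that a uniform point of `D̂₁(o)` falls in a given sector `Q_i` (or `R_i`): each
of them has area `δ² θ_b / 2`. -/
def sectorProb (o : Plane) (b : ℝ) : ℝ := lamHat o * δ b ^ 2 / (2 * L b)

lemma sectorProb_nonneg (o : Plane) (b : ℝ) : 0 ≤ sectorProb o b := by
  have := lamHat_nonneg o
  unfold sectorProb
  positivity

lemma δ_natCast_nonneg (b : ℕ) : 0 ≤ δ b := by
  have := log_natCast_nonneg b
  unfold δ
  positivity

lemma θb_nonneg (b : ℝ) : 0 ≤ θb b := by
  unfold θb
  positivity

lemma θb_lt_pi {b : ℝ} (hL : 2 ≤ L b) : θb b < π :=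
  div_lt_self pi_pos (by exact_mod_cast hL)

lemma measureReal_unif_Dhat_sector {o : Plane} {b : ℝ} (φ : ℝ) (hδ : 0 ≤ δ b) (hL : 2 ≤ L b)
    (hsub : D o (δ b) ⊆ Dhat o) :
    (unif (Dhat o)).real (sector o (δ b) φ (θb b / 2)) = sectorProb o b := by
  rw [measureReal_unif_sector φ hδ (div_nonneg (θb_nonneg b) zero_le_two)
    (by linarith [θb_lt_pi hL, pi_pos]) hsub, sectorProb, lamHat, θb]
  ring

lemma integral_tau_eq_sum_measureReal {o : Plane} {b : ℕ} [IsFiniteMeasure (ptsMeasure o b)]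
    (hmeas : ∀ i, MeasurableSet {ω : Fin b → Plane |
      countIn (Qsector o b i) ω = 1 ∧ countIn (Rsector o b i) ω = 1}) :
    ∫ ω, (tau o b ω : ℝ) ∂(ptsMeasure o b) = ∑ i ∈ Finset.range (L b),
      (ptsMeasure o b).real
        {ω | countIn (Qsector o b i) ω = 1 ∧ countIn (Rsector o b i) ω = 1} := by
  have htau (ω : Fin b → Plane) : (tau o b ω : ℝ) = ∑ i ∈ Finset.range (L b),
      {ω | countIn (Qsector o b i) ω = 1 ∧ countIn (Rsector o b i) ω = 1}.indicator 1 ω := by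
    simp [tau, indicator_apply]
  simp_rw [htau]
  rw [integral_finsetSum _ fun i _ => (integrable_const 1).indicator (hmeas i)]
  exact Finset.sum_congr rfl fun i _ => integral_indicator_one (hmeas i)

lemma integral_tau {o : Plane} (ho : o ∈ quad) {b : ℕ} (hδ : δ b ≤ 1) (hL : 2 ≤ L b)
    (hsub : D o (δ b) ⊆ quad) :
    ∫ ω, (tau o b ω : ℝ) ∂(ptsMeasure o b) =
      L b * (b * (b - 1) * (sectorProb o b ^ 2 * (1 - 2 * sectorProb o b) ^ (b - 2))) := by
  have : IsProbabilityMeasure (unif (Dhat o)) :=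
    isProbabilityMeasure_unif (ENNReal.toReal_pos_iff.1 (volume_Dhat_pos ho)).1.ne'
      (volume_Dhat_ne_top o)
  have : IsProbabilityMeasure (ptsMeasure o b) := by
    unfold ptsMeasure
    infer_instance
  have hD : D o (δ b) ⊆ Dhat o := subset_inter (Metric.closedBall_subset_closedBall hδ) hsub
  have hmeas (φ : ℝ) : MeasurableSet (sector o (δ b) φ (θb b / 2)) :=
    measurableSet_sector o (δ b) φ (by linarith [θb_lt_pi hL, pi_pos])
  have hdisj (φ : ℝ) :
      Disjoint (sector o (δ b) φ (θb b / 2)) (sector o (δ b) (φ + π) (θb b / 2)) :=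
    disjoint_sector_add_pi o (δ b) φ (by linarith [θb_lt_pi hL])
  have hprob (φ : ℝ) := measureReal_unif_Dhat_sector φ (δ_natCast_nonneg b) hL hD
  rw [integral_tau_eq_sum_measureReal, Finset.sum_congr rfl, Finset.sum_const, Finset.card_range,
    nsmul_eq_mul]
  · intro i _
    rw [Qsector_eq_sector, Rsector_eq_sector]
    refine (measureReal_setOf_ncard_eq_one_and_ncard_eq_one _ (hmeas _) (hmeas _)
      (hdisj _)).trans ?_
    rw [hprob, hprob, Fintype.card_fin]
    ring
  · intro i
    rw [Qsector_eq_sector, Rsector_eq_sector]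
    exact (measurableSet_setOf_ncard_eq_one (hmeas _)).inter
      (measurableSet_setOf_ncard_eq_one (hmeas _))

end Expectation

section Asymptotics

lemma rpow_one_third_pow_three {b : ℝ} (hb : 0 ≤ b) : (b ^ (1 / 3 : ℝ)) ^ 3 = b := by
  rw [← rpow_natCast, ← rpow_mul hb]
  norm_num

lemma div_floor_le {x : ℝ} (hx : 1 ≤ x) : x / ⌊x⌋₊ ≤ 1 + 2 / x := by
  have hhalf : x / 2 < ⌊x⌋₊ := Nat.div_two_lt_floor hx
  have hfloor : (0 : ℝ) < ⌊x⌋₊ := by linarith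
  calc x / ⌊x⌋₊ ≤ (⌊x⌋₊ + 1) / ⌊x⌋₊ := by gcongr; exact (Nat.lt_floor_add_one x).le
    _ = 1 + 1 / ⌊x⌋₊ := by rw [add_div, div_self hfloor.ne']
    _ ≤ 1 + 1 / (x / 2) := by gcongr
    _ = 1 + 2 / x := by rw [one_div_div]

lemma one_le_div_floor {x : ℝ} (hx : 1 ≤ x) : 1 ≤ x / ⌊x⌋₊ := by
  rw [one_le_div (by exact_mod_cast Nat.floor_pos.2 hx)]
  exact Nat.floor_le (by positivity)

lemma one_sub_natCast_mul_le_pow {q : ℝ} (hq₀ : 0 ≤ q) (hq : q ≤ 1) {m n : ℕ} (hmn : m ≤ n) :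
    1 - n * q ≤ (1 - q) ^ m :=
  calc 1 - n * q = 1 + n * -q := by ring
    _ ≤ (1 + -q) ^ n := one_add_mul_le_pow (by linarith) n
    _ = (1 - q) ^ n := by rw [← sub_eq_add_neg]
    _ ≤ (1 - q) ^ m := pow_le_pow_of_le_one (by linarith) (by linarith) hmn

lemma abs_mul_mul_sub_one_le {u v w α β γ : ℝ} (hu₀ : 0 ≤ u) (hu : u ∈ Icc (1 - α) 1)
    (hv : v ∈ Icc 1 (1 + β)) (hw₀ : 0 ≤ w) (hw : w ∈ Icc (1 - γ) 1) :
    |u * v * w - 1| ≤ max (α + γ) β := by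
  obtain ⟨hαu, hu₁⟩ := hu
  obtain ⟨hv₁, hvβ⟩ := hv
  obtain ⟨hγw, hw₁⟩ := hw
  have hlower : 1 - (α + γ) ≤ u * v * w :=
    calc 1 - (α + γ) ≤ u * 1 * w := by nlinarith
      _ ≤ u * v * w := by gcongr
  have hupper : u * v * w ≤ 1 + β :=
    calc u * v * w ≤ 1 * v * 1 := by gcongr
      _ ≤ 1 + β := by linarith
  rw [abs_le]
  constructor
  · linarith [le_max_left (α + γ) β]
  · linarith [le_max_right (α + γ) β]

lemma sectorProb_eq (o : Plane) {b : ℝ} (hb : 0 < b) :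
    sectorProb o b =
      lamHat o / (2 * b * log b ^ 4) * (b ^ (1 / 3 : ℝ) * log b ^ 2 / L b) := by
  have hcube := rpow_one_third_pow_three hb.le
  have hroot : b ^ (1 / 3 : ℝ) ≠ 0 := by positivity
  rw [sectorProb, δ]
  generalize b ^ (1 / 3 : ℝ) = B at *
  generalize (L b : ℝ) = n at *
  rw [← hcube]
  field_simp

lemma expected_count_eq_main_term_mul (o : Plane) {b : ℝ} (hb : 0 < b) (w : ℝ) :
    L b * (b * (b - 1) * (sectorProb o b ^ 2 * w)) =
      b ^ (1 / 3 : ℝ) * lamHat o ^ 2 / (4 * log b ^ 6) *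
        ((1 - 1 / b) * (b ^ (1 / 3 : ℝ) * log b ^ 2 / L b) * w) := by
  rw [sectorProb_eq o hb]
  field_simp
  ring

lemma mul_two_mul_sectorProb_le (o : Plane) {b : ℝ} (hb : 0 < b)
    (hx : 1 ≤ b ^ (1 / 3 : ℝ) * log b ^ 2) :
    b * (2 * sectorProb o b) ≤ 2 * lamHat o / log b ^ 4 := by
  have hratio : b ^ (1 / 3 : ℝ) * log b ^ 2 / L b ≤ 2 := by
    have hhalf : b ^ (1 / 3 : ℝ) * log b ^ 2 / 2 < L b := Nat.div_two_lt_floor hx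
    rw [div_le_iff₀ (by linarith)]
    linarith
  have hlam := lamHat_nonneg o
  calc b * (2 * sectorProb o b)
      = lamHat o / log b ^ 4 * (b ^ (1 / 3 : ℝ) * log b ^ 2 / L b) := by
        rw [sectorProb_eq o hb]
        field_simp
    _ ≤ lamHat o / log b ^ 4 * 2 := by gcongr
    _ = 2 * lamHat o / log b ^ 4 := by ring

lemma log_pow_four_le_rpow_mul {b : ℝ} (hroot : log b ^ 2 ≤ b ^ (1 / 3 : ℝ)) :
    log b ^ 4 ≤ b ^ (1 / 3 : ℝ) * log b ^ 2 :=
  calc log b ^ 4 = log b ^ 2 * log b ^ 2 := by ring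
    _ ≤ b ^ (1 / 3 : ℝ) * log b ^ 2 := by gcongr

lemma log_pow_four_le {b : ℝ} (hb : 0 ≤ b) (hroot₁ : 1 ≤ b ^ (1 / 3 : ℝ))
    (hroot : log b ^ 2 ≤ b ^ (1 / 3 : ℝ)) : log b ^ 4 ≤ b :=
  calc log b ^ 4 = (log b ^ 2) ^ 2 := by ring
    _ ≤ (b ^ (1 / 3 : ℝ)) ^ 2 := by gcongr
    _ ≤ (b ^ (1 / 3 : ℝ)) ^ 3 := pow_le_pow_right₀ hroot₁ (by norm_num)
    _ = b := rpow_one_third_pow_three hb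

lemma one_sub_two_mul_sectorProb_pow_mem_Icc {o : Plane} (ho : o ∈ quad) {b m : ℕ}
    (hm : m ≤ b) (hb : 1 ≤ b) (hlog : 32 ≤ log b ^ 4)
    (hx : 1 ≤ (b : ℝ) ^ (1 / 3 : ℝ) * log b ^ 2) :
    0 ≤ (1 - 2 * sectorProb o b) ^ m ∧
      (1 - 2 * sectorProb o b) ^ m ∈ Icc (1 - 32 / log b ^ 4) 1 := by
  have hp₀ : 0 ≤ 2 * sectorProb o b := mul_nonneg zero_le_two (sectorProb_nonneg o b)
  have hbp : b * (2 * sectorProb o b) ≤ 32 / log b ^ 4 :=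
    calc b * (2 * sectorProb o b) ≤ 2 * lamHat o / log b ^ 4 :=
          mul_two_mul_sectorProb_le o (by exact_mod_cast hb) hx
      _ ≤ 32 / log b ^ 4 := by
          gcongr
          linarith [lamHat_le ho]
  have hp₁ : 2 * sectorProb o b ≤ 1 :=
    calc 2 * sectorProb o b ≤ b * (2 * sectorProb o b) :=
          le_mul_of_one_le_left hp₀ (by exact_mod_cast hb)
      _ ≤ 32 / log b ^ 4 := hbp
      _ ≤ 1 := div_le_one_of_le₀ hlog (by positivity)
  exact ⟨pow_nonneg (by linarith) _, by linarith [one_sub_natCast_mul_le_pow hp₀ hp₁ hm],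
    pow_le_one₀ (by linarith) (by linarith)⟩

lemma abs_relative_error_le {o : Plane} (ho : o ∈ quad) {b : ℕ} (hlog : 3 ≤ log b)
    (hroot : log b ^ 2 ≤ (b : ℝ) ^ (1 / 3 : ℝ)) :
    |(1 - 1 / b) * ((b : ℝ) ^ (1 / 3 : ℝ) * log b ^ 2 / L b) *
      (1 - 2 * sectorProb o b) ^ (b - 2) - 1| ≤ 33 / log b ^ 4 := by
  have hroot₁ : 1 ≤ (b : ℝ) ^ (1 / 3 : ℝ) := (one_le_pow₀ (by linarith)).trans hroot
  have hlog4 : 3 ^ 4 ≤ log b ^ 4 := by gcongr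
  have hlog_le_x := log_pow_four_le_rpow_mul hroot
  have hlog_le_b := log_pow_four_le b.cast_nonneg hroot₁ hroot
  have hx₁ : 1 ≤ (b : ℝ) ^ (1 / 3 : ℝ) * log b ^ 2 := by linarith
  have hb₁ : (1 : ℝ) ≤ b := by linarith
  have hu₀ : 0 ≤ 1 - 1 / (b : ℝ) := by linarith [div_le_one_of_le₀ hb₁ b.cast_nonneg]
  have hu : 1 - 1 / (b : ℝ) ∈ Icc (1 - 1 / log b ^ 4) 1 :=
    ⟨by gcongr, sub_le_self 1 (by positivity)⟩
  have hv : (b : ℝ) ^ (1 / 3 : ℝ) * log b ^ 2 / L b ∈ Icc 1 (1 + 2 / log b ^ 4) :=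
    ⟨one_le_div_floor hx₁, (div_floor_le hx₁).trans (by gcongr)⟩
  obtain ⟨hw₀, hw⟩ := one_sub_two_mul_sectorProb_pow_mem_Icc ho (b.sub_le 2)
    (by exact_mod_cast hb₁) (by linarith) hx₁
  refine (abs_mul_mul_sub_one_le hu₀ hu hv hw₀ hw).trans (max_le (le_of_eq (by ring)) ?_)
  gcongr
  norm_num

lemma δ_le_one {b : ℝ} (hroot : 1 ≤ b ^ (1 / 3 : ℝ)) (hlog : 1 ≤ log b) : δ b ≤ 1 :=
  div_le_one_of_le₀ (one_le_mul_of_one_le_of_one_le hroot hlog) (by positivity)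

lemma eventually_log_bounds :
    ∀ᶠ b : ℕ in Filter.atTop, 3 ≤ log b ∧ log b ^ 2 ≤ (b : ℝ) ^ (1 / 3 : ℝ) := by
  have hlog : ∀ᶠ x : ℝ in Filter.atTop, 3 ≤ log x := tendsto_log_atTop.eventually_ge_atTop 3
  have hroot : ∀ᶠ x : ℝ in Filter.atTop, log x ^ 2 ≤ x ^ (1 / 3 : ℝ) := by
    filter_upwards [(isLittleO_log_rpow_rpow_atTop (s := 1 / 3) 2 (by norm_num)).bound one_pos,
      Filter.eventually_ge_atTop 0] with x hx hx₀
    rwa [rpow_two, one_mul, norm_of_nonneg (by positivity), norm_of_nonneg (by positivity)] at hx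
  exact tendsto_natCast_atTop_atTop.eventually (hlog.and hroot)

end Asymptotics

/-- There are `C > 0` and `b₀` such that for all integers `b ≥ b₀` and all
`o ∈ ℝ₊²` with `D_δ(o) ⊆ ℝ₊²`:
`|E(τ_b) − b^{1/3} λ̂(o)² / (4 (log b)⁶)| ≤ C b^{1/3} / (log b)^{10}`. -/
theorem expectation_tau :
    ∃ C > (0 : ℝ), ∃ b₀ : ℕ, ∀ b : ℕ, b₀ ≤ b → ∀ o : Plane, o ∈ quad → D o (δ b) ⊆ quad →
      |(∫ ω, (tau o b ω : ℝ) ∂(ptsMeasure o b)) -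
          (b : ℝ) ^ (1/3 : ℝ) * lamHat o ^ 2 / (4 * (Real.log b) ^ 6)| ≤
        C * (b : ℝ) ^ (1/3 : ℝ) / (Real.log b) ^ 10 := by
  obtain ⟨b₀, hb₀⟩ := Filter.eventually_atTop.1 eventually_log_bounds
  refine ⟨2112, by norm_num, b₀, fun b hb o ho hsub => ?_⟩
  obtain ⟨hlog, hroot⟩ := hb₀ b hb
  have hroot₁ : 1 ≤ (b : ℝ) ^ (1 / 3 : ℝ) := (one_le_pow₀ (by linarith)).trans hroot
  have hL : 2 ≤ L b := Nat.le_floor (by push_cast; nlinarith)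
  have hb_pos : (0 : ℝ) < b := by
    rw [← rpow_one_third_pow_three b.cast_nonneg]
    positivity
  rw [integral_tau ho (δ_le_one hroot₁ (by linarith)) hL hsub,
    expected_count_eq_main_term_mul o hb_pos, ← mul_sub_one, abs_mul,
    abs_of_nonneg (by positivity)]
  calc _ ≤ (b : ℝ) ^ (1 / 3 : ℝ) * 16 ^ 2 / (4 * log b ^ 6) * (33 / log b ^ 4) := by
        gcongr
        · exact lamHat_nonneg o
        · exact lamHat_le ho
        · exact abs_relative_error_le ho hlog hroot
    _ = 2112 * (b : ℝ) ^ (1 / 3 : ℝ) / log b ^ 10 := by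
        field_simp
        norm_num
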